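/- arXiv:1802.01793 — 2 statements merged into one kernel-verified Lean document; each statement's English description precedes it below -/
import Mathlib

section
/- Let p ≥ 3 be an odd integer, let i ≥ 0, and set k = (p − 1)/2 + i·p. Then for every integer j, the integer (j − 2)·s_k(j)² divides s_k(T_p(j)) − p·s_i(T_p(j)). -/
/-!
Write `j = y² + y⁻²`, so that `s_k(j) = (y^(2k+1) - y^(-(2k+1))) / (y - y⁻¹)` and
`T_m(j) = y^(2m) + y^(-2m)`. Put `p = 2q + 1`, `n = T_p(j)` and `N = 2k + 1 = p (2i + 1)`. Then

* `s_k(n) = s_i(n) · s_q(T_{2i+1}(n))` (`s_factor`), and `T_{2i+1}(n) = T_N(j)` (`T_comp`);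
* `s_q(t) ≡ 2q + 1 = p` modulo `t - 2` (`sub_two_dvd`);
* `T_N(j) - 2 = (j - 2) · s_k(j)²` (`T_odd`).

Hence `s_k(n) - p · s_i(n) = s_i(n) · (s_q(T_N(j)) - p)` is divisible by
`T_N(j) - 2 = (j - 2) · s_k(j)²`. The proofs below avoid `y` and use only the recurrences.
-/

/-- The sequence `s_k(n)`: `s_0 = 1`, `s_1 = n + 1`, `s_{k+2} = n·s_{k+1} − s_k`. -/
def s (n : ℤ) : ℕ → ℤ
  | 0 => 1
  | 1 => n + 1
  | k + 2 => n * s n (k + 1) - s n k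

/-- The sequence `r_k(n)`: `r_0 = 1`, `r_1 = n − 1`, `r_{k+2} = n·r_{k+1} − r_k`. -/
def r (n : ℤ) : ℕ → ℤ
  | 0 => 1
  | 1 => n - 1
  | k + 2 => n * r n (k + 1) - r n k

/-- Dilated Chebyshev polynomials of the first kind: `T_0 = 2`, `T_1 = n`. -/
def T (n : ℤ) : ℕ → ℤ
  | 0 => 2
  | 1 => n
  | k + 2 => n * T n (k + 1) - T n k

/-- Dilated Chebyshev polynomials of the second kind: `U_0 = 1`, `U_1 = n`. -/
def U (n : ℤ) : ℕ → ℤ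
  | 0 => 1
  | 1 => n
  | k + 2 => n * U n (k + 1) - U n k

theorem s_rec (n : ℤ) (k : ℕ) : s n (k + 2) = n * s n (k + 1) - s n k := rfl

theorem T_rec (n : ℤ) (k : ℕ) : T n (k + 2) = n * T n (k + 1) - T n k := rfl

/-- A solution of the recurrence `f (a + 2) = n * f (a + 1) - f a`, sampled along an arithmetic
progression of step `m`, satisfies the same recurrence with `n` replaced by `T_m(n)`. -/
theorem step_rec (n : ℤ) (f : ℕ → ℤ) (hf : ∀ a, f (a + 2) = n * f (a + 1) - f a) (m : ℕ) :
    ∀ a, f (a + 2 * m) + f a = T n m * f (a + m) := by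
  induction m using Nat.twoStepInduction with
  | zero => intro a; simp [T]; ring
  | one => intro a; simp [T, hf a]
  | more m ih0 ih1 =>
    intro a
    have h0 := ih0 (a + 2)
    have h1 := ih1 (a + 1)
    have h2 := hf (a + 2 * m + 2)
    have h3 := hf a
    rw [show a + 2 + 2 * m = a + 2 * m + 2 by ring, show a + 2 + m = a + (m + 2) by ring] at h0
    rw [show a + 1 + 2 * (m + 1) = a + 2 * m + 2 + 1 by ring,
      show a + 1 + (m + 1) = a + (m + 2) by ring] at h1
    rw [show a + 2 * (m + 2) = a + 2 * m + 2 + 2 by ring, T_rec]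
    linear_combination h2 + h3 + n * h1 - h0

theorem T_comp (j : ℤ) (p m : ℕ) : T (T j p) m = T j (p * m) := by
  induction m using Nat.twoStepInduction with
  | zero => simp [T]
  | one => simp [T]
  | more m ih0 ih1 =>
    have h := step_rec j (T j) (T_rec j) p (p * m)
    rw [T_rec, ih0, ih1, show p * (m + 2) = p * m + 2 * p by ring,
      show p * (m + 1) = p * m + p by ring]
    linear_combination -h

theorem T_eq_sub (n : ℤ) (d : ℕ) : T n (d + 1) = s n (d + 1) - s n d := by
  induction d using Nat.twoStepInduction with
  | zero => simp [T, s]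
  | one => simp [T, s]; ring
  | more d ih0 ih1 =>
    rw [T_rec n (d + 1), s_rec n (d + 1)]
    linear_combination n * ih1 - ih0 + s_rec n d

/-- The reflected form of `step_rec` for `s`: extending `s` to negative indices gives
`s_{-d-1} = -s_d`, so `s_{a+m} + s_{a-m} = T_m s_a` with `m = a + 1 + d` reads as below. -/
theorem s_reflect (n : ℤ) (a : ℕ) :
    ∀ d, s n (2 * a + 1 + d) = T n (a + 1 + d) * s n a + s n d := by
  induction a using Nat.twoStepInduction with
  | zero =>
    intro d
    have h := T_eq_sub n d
    simp only [mul_zero, zero_add, add_comm 1 d, s]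
    linear_combination -h
  | one =>
    intro d
    have h := T_eq_sub n (d + 1)
    rw [show 2 * 1 + 1 + d = d + 1 + 2 by ring, show 1 + 1 + d = d + 1 + 1 by ring]
    simp only [s] at *
    linear_combination -(n + 1) * h
  | more a ih0 ih1 =>
    intro d
    have h0 := ih0 (d + 2)
    have h1 := ih1 (d + 1)
    have h := s_rec n (2 * a + 3 + d)
    have hd := s_rec n d
    rw [show 2 * a + 1 + (d + 2) = 2 * a + 3 + d by ring,
      show a + 1 + (d + 2) = a + 2 + 1 + d by ring] at h0
    rw [show 2 * (a + 1) + 1 + (d + 1) = 2 * a + 3 + d + 1 by ring,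
      show a + 1 + 1 + (d + 1) = a + 2 + 1 + d by ring] at h1
    rw [show 2 * (a + 2) + 1 + d = 2 * a + 3 + d + 2 by ring, s_rec n a]
    linear_combination h + n * h1 - h0 - hd

theorem s_factor (n : ℤ) (i q : ℕ) :
    s n (i + q * (2 * i + 1)) = s n i * s (T n (2 * i + 1)) q := by
  induction q using Nat.twoStepInduction with
  | zero => simp [s]
  | one =>
    have h := s_reflect n i i
    rw [show 2 * i + 1 + i = i + 1 * (2 * i + 1) by ring,
      show i + 1 + i = 2 * i + 1 by ring] at h
    rw [h]
    simp only [s]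
    ring
  | more q ih0 ih1 =>
    have h := step_rec n (s n) (s_rec n) (2 * i + 1) (i + q * (2 * i + 1))
    rw [show i + q * (2 * i + 1) + 2 * (2 * i + 1) = i + (q + 2) * (2 * i + 1) by ring,
      show i + q * (2 * i + 1) + (2 * i + 1) = i + (q + 1) * (2 * i + 1) by ring] at h
    rw [s_rec]
    linear_combination h + T n (2 * i + 1) * ih1 - ih0

theorem sub_two_dvd (t : ℤ) (q : ℕ) : t - 2 ∣ s t q - (2 * q + 1) := by
  induction q using Nat.twoStepInduction with
  | zero => simp [s]
  | one => exact ⟨1, by simp only [s]; push_cast; ring⟩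
  | more q ih0 ih1 =>
    obtain ⟨a, ha⟩ := ih0
    obtain ⟨b, hb⟩ := ih1
    refine ⟨t * b - a + (2 * q + 3), ?_⟩
    rw [s_rec]
    push_cast at *
    linear_combination t * hb - ha

theorem s_invariant (j : ℤ) (k : ℕ) :
    s j (k + 1) ^ 2 - j * s j k * s j (k + 1) + s j k ^ 2 = j + 2 := by
  induction k with
  | zero => simp only [s]; ring
  | succ k ih => rw [s_rec]; linear_combination ih

/-- The even-index formula is carried along only to make the induction go through. -/
theorem T_odd (j : ℤ) (k : ℕ) :
    T j (2 * k + 1) = (j - 2) * s j k ^ 2 + 2 ∧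
      T j (2 * k + 2) = (j - 2) * s j k * s j (k + 1) + j := by
  induction k with
  | zero => constructor <;> simp only [T, s] <;> ring
  | succ k ih =>
    obtain ⟨h1, h2⟩ := ih
    have hinv := s_invariant j k
    have h3 : T j (2 * k + 3) = (j - 2) * s j (k + 1) ^ 2 + 2 := by
      rw [T_rec j (2 * k + 1)]
      linear_combination j * h2 - h1 - (j - 2) * hinv
    refine ⟨h3, ?_⟩
    rw [show 2 * (k + 1) + 2 = 2 * k + 2 + 2 by ring, T_rec, s_rec]
    linear_combination j * h3 - h2

theorem s_congruence_mod_square (p : ℕ) (hp : Odd p) (hp3 : 3 ≤ p) (i : ℕ) (k : ℕ)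
    (hk : k = (p - 1) / 2 + i * p) (j : ℤ) :
    (j - 2) * (s j k) ^ 2 ∣ s (T j p) k - (p : ℤ) * s (T j p) i := by
  obtain ⟨q, rfl⟩ := hp
  have hk' : k = i + q * (2 * i + 1) := by
    rw [hk, show (2 * q + 1 - 1) / 2 = q by omega]
    ring
  have hT : T (T j (2 * q + 1)) (2 * i + 1) - 2 = (j - 2) * s j k ^ 2 := by
    rw [T_comp, show (2 * q + 1) * (2 * i + 1) = 2 * k + 1 by rw [hk']; ring, (T_odd j k).1]
    ring
  have hs : s (T j (2 * q + 1)) k = s (T j (2 * q + 1)) i *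
      s (T (T j (2 * q + 1)) (2 * i + 1)) q := by
    rw [hk', s_factor]
  rw [← hT, hs]
  obtain ⟨c, hc⟩ := sub_two_dvd (T (T j (2 * q + 1)) (2 * i + 1)) q
  refine ⟨s (T j (2 * q + 1)) i * c, ?_⟩
  push_cast
  linear_combination s (T j (2 * q + 1)) i * hc
end

section
/- For every integer n and all natural numbers k and m, s_{k+2m+1}(n) − s_k(n) = T_{k+m+1}(n) · s_m(n). (This is the identity s_{k+p}(n) − s_k(n) = T_{k+(p+1)/2}(n)·s_{(p−1)/2}(n) with odd p = 2m + 1.) -/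
theorem s_succ_sub (n : ℤ) (k : ℕ) : s n (k + 1) - s n k = T n (k + 1) := by
  induction k using Nat.twoStepInduction with
  | zero => simp [s, T]
  | one => simp only [s, T]; ring
  | more k h0 h1 =>
    have e1 : s n (k + 3) = n * s n (k + 2) - s n (k + 1) := rfl
    have e2 : s n (k + 2) = n * s n (k + 1) - s n k := rfl
    have e3 : T n (k + 3) = n * T n (k + 2) - T n (k + 1) := rfl
    change s n (k + 2) - s n (k + 1) = T n (k + 2) at h1
    change s n (k + 3) - s n (k + 2) = T n (k + 3)
    linear_combination e1 - e2 - e3 + n * h1 - h0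

theorem s_shift_identity (n : ℤ) (k m : ℕ) :
    s n (k + (2 * m + 1)) - s n k = T n (k + m + 1) * s n m := by
  induction m using Nat.twoStepInduction generalizing k with
  | zero => simpa [s] using s_succ_sub n k
  | one =>
    have h0 := s_succ_sub n k
    have h1 : s n (k + 2) - s n (k + 1) = T n (k + 2) := s_succ_sub n (k + 1)
    have h2 : s n (k + 3) - s n (k + 2) = T n (k + 3) := s_succ_sub n (k + 2)
    have e : T n (k + 3) = n * T n (k + 2) - T n (k + 1) := rfl
    change s n (k + 3) - s n k = T n (k + 2) * (n + 1)
    linear_combination h0 + h1 + h2 + e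
  | more m h0 h1 =>
    -- Both instances have the same index `k + m + 3` of `T` as the goal.
    have h0 := h0 (k + 2)
    have h1 := h1 (k + 1)
    rw [show k + 2 + (2 * m + 1) = k + 2 * m + 3 by ring,
      show k + 2 + m + 1 = k + m + 3 by ring] at h0
    rw [show k + 1 + (2 * (m + 1) + 1) = k + 2 * m + 4 by ring,
      show k + 1 + (m + 1) + 1 = k + m + 3 by ring] at h1
    rw [show k + (2 * (m + 2) + 1) = k + 2 * m + 5 by ring,
      show k + (m + 2) + 1 = k + m + 3 by ring]
    have e1 : s n (k + 2 * m + 5) = n * s n (k + 2 * m + 4) - s n (k + 2 * m + 3) := rfl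
    have e2 : s n (k + 2) = n * s n (k + 1) - s n k := rfl
    have e3 : s n (m + 2) = n * s n (m + 1) - s n m := rfl
    linear_combination e1 - e2 - T n (k + m + 3) * e3 + n * h1 - h0
end
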